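/- Let φ be an automorphism of the open unit ball B_N of ℂ^N, i.e. a biholomorphic bijection of B_N onto itself. Then φ can be embedded into a semigroup of holomorphic self-maps of B_N; that is, there exists a semigroup (φ_t)_{t≥0} of holomorphic self-maps of B_N with φ_1 = φ. -/

import Mathlib

open Set Complex Filter

noncomputable section

/-- The squared Euclidean norm on `ℂ^n`. -/
def enormSq {n : Type*} [Fintype n] (x : n → ℂ) : ℝ :=
  ∑ j, ‖x j‖ ^ 2

/-- The open unit ball `B_N` of `ℂ^N`. -/
def Ball (N : ℕ) : Set (Fin N → ℂ) := {z | enormSq z < 1}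

/-- `(φ t)_{t ≥ 0}` is a (continuous) semigroup of holomorphic self-maps of `U`. -/
def IsHolSemigroupOn {E : Type*} [NormedAddCommGroup E] [NormedSpace ℂ E]
    (U : Set E) (φ : ℝ → E → E) : Prop :=
  (∀ t : ℝ, 0 ≤ t → MapsTo (φ t) U U) ∧
  (∀ t : ℝ, 0 ≤ t → DifferentiableOn ℂ (φ t) U) ∧
  (∀ z ∈ U, φ 0 z = z) ∧
  (∀ s : ℝ, 0 ≤ s → ∀ t : ℝ, 0 ≤ t → ∀ z ∈ U, φ (s + t) z = φ s (φ t z)) ∧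
  (∀ K : Set E, K ⊆ U → IsCompact K →
    TendstoUniformlyOn (fun t => φ t) id (nhdsWithin 0 (Ioi 0)) K)

/-
A linear fractional map given by an operator on `E × ℂ` preserving `‖z‖² - |w|²` maps the unit ball
of `E` to itself, and every automorphism `φ` is of this form: a reflection moving `φ 0` to `0`
reduces to the case `φ 0 = 0`, where the Schwarz lemma gives `‖φ z‖ = ‖z‖` and its equality case
makes `φ` linear. It remains to embed the operator `M` into a one-parameter group of such operators.

They are the unitaries for the involution `a ↦ J a⋆ J`, where `J (z, w) = (z, -w)`. This is not a
C⋆-algebra, so unitaries need not have logarithms commuting with their adjoints by spectral theory.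
But `M` has finite spectrum, hence is joined to `1` inside the invertible elements of its
bicommutant, and so `M = exp x` with `x` in the bicommutant; as `M` is normal, so is `x`. Then
`M = s * exp (i ℑx)` with `s = exp ℜx` both self-adjoint and unitary, so that `s² = 1` and
`s = exp (i π (1 - s) / 2)`. Hence `M = exp (i y)` with `y` self-adjoint, and `exp (i t y)` is the
one-parameter group.
-/

section Exponential

open NormedSpace

/-- A continuous one-parameter group in a topological monoid. -/
structure IsOneParameterGroup {A : Type*} [Monoid A] [TopologicalSpace A] (T : ℝ → A) : Prop where
  continuous : Continuous T
  map_zero : T 0 = 1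
  map_add (s t : ℝ) : T (s + t) = T s * T t

theorem isOneParameterGroup_exp_smul {A : Type*} [NormedRing A] [NormedAlgebra ℝ A]
    [CompleteSpace A] (x : A) : IsOneParameterGroup fun t : ℝ => exp (t • x) := by
  let _ : NormedAlgebra ℚ A := .restrictScalars ℚ ℝ A
  refine ⟨exp_continuous.comp (by fun_prop), by rw [zero_smul, NormedSpace.exp_zero],
    fun s t => ?_⟩
  rw [add_smul, NormedSpace.exp_add_of_commute]
  exact ((Commute.refl x).smul_left s).smul_right t

theorem isUnit_centralizer_iff {R A : Type*} [CommSemiring R] [Semiring A] [Algebra R A]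
    {S : Set A} {x : Subalgebra.centralizer R S} : IsUnit x ↔ IsUnit (x : A) := by
  refine ⟨fun hx => hx.map (Subalgebra.centralizer R S).val, fun ⟨u, hu⟩ => ?_⟩
  have hinv : (↑u⁻¹ : A) ∈ Subalgebra.centralizer R S := fun s hs =>
    (show Commute s u from hu ▸ x.2 s hs).units_inv_right
  exact ⟨⟨x, ⟨↑u⁻¹, hinv⟩, Subtype.ext (by simp [← hu]), Subtype.ext (by simp [← hu])⟩, rfl⟩

theorem spectrum_centralizer_eq {R A : Type*} [CommRing R] [Ring A] [Algebra R A]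
    {S : Set A} (x : Subalgebra.centralizer R S) : spectrum R x = spectrum R (x : A) := by
  ext r
  rw [spectrum.mem_iff, spectrum.mem_iff, isUnit_centralizer_iff]
  rfl

theorem isStarNormal_of_mem_centralizer_centralizer {A : Type*} [Semigroup A] [StarMul A]
    {a x : A} [IsStarNormal a] (hx : x ∈ ({a} : Set A).centralizer.centralizer) :
    IsStarNormal x := by
  have hcomm {y : A} (hy : Commute y a) : Commute y x :=
    hx y <| by simpa [Set.mem_centralizer_iff] using hy.eq.symm
  exact ⟨hcomm (commute_star_comm.2 (hcomm (star_comm_self' a)).symm)⟩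

theorem one_sub_inv_mem_spectrum_of_not_isUnit {𝕜 A : Type*} [Field 𝕜] [Ring A] [Algebra 𝕜 A]
    {a : A} {z : 𝕜} (hz : ¬IsUnit (1 + z • (a - 1))) : 1 - z⁻¹ ∈ spectrum 𝕜 a := by
  rcases eq_or_ne z 0 with rfl | hz0
  · simp at hz
  have hfactor : 1 + z • (a - 1) = algebraMap 𝕜 A (-z) * (algebraMap 𝕜 A (1 - z⁻¹) - a) := by
    have hcoeff : -z * (1 - z⁻¹) = 1 - z := by field_simp; ring
    rw [← Algebra.smul_def, smul_sub (-z), Algebra.algebraMap_eq_smul_one, smul_smul, hcoeff]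
    module
  rw [spectrum.mem_iff]
  exact fun h => hz (hfactor ▸ ((IsUnit.mk0 (-z) (neg_ne_zero.2 hz0)).map _).mul h)

section Commutative

variable {A : Type*} [NormedCommRing A] [CompleteSpace A]

theorem isOpen_range_exp [NormedAlgebra ℝ A] : IsOpen (range (exp : A → A)) := by
  let _ : NormedAlgebra ℚ A := .restrictScalars ℚ ℝ A
  refine (IsOpenMap.of_nhds_le fun x => ?_).isOpen_range
  refine (hasStrictFDerivAt_exp (𝕂 := ℝ) (x := x)).map_nhds_eq_of_surj ?_ |>.ge
  rw [LinearMap.range_eq_top]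
  refine fun y => ⟨exp (-x) * y, ?_⟩
  change exp x * (exp (-x) * y) = y
  rw [← mul_assoc, ← NormedSpace.exp_add, add_neg_cancel, NormedSpace.exp_zero, one_mul]

theorem isOpen_setOf_isUnit_diff_range_exp [NormedAlgebra ℝ A] :
    IsOpen ({u : A | IsUnit u} \ range exp) := by
  let _ : NormedAlgebra ℚ A := .restrictScalars ℚ ℝ A
  refine isOpen_iff_mem_nhds.2 ?_
  rintro _ ⟨⟨u, rfl⟩, hu⟩
  have hnhds : (fun x : A => ↑u⁻¹ * x) ⁻¹' range exp ∈ nhds (u : A) :=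
    (isOpen_range_exp.preimage (continuous_const_mul _)).mem_nhds ⟨0, by simp⟩
  filter_upwards [hnhds] with x ⟨y, hy⟩
  have hx : x = u * exp y := by rw [hy, Units.mul_inv_cancel_left]
  refine ⟨hx ▸ u.isUnit.mul (isUnit_exp y), fun ⟨w, hw⟩ => hu ⟨w - y, ?_⟩⟩
  rw [sub_eq_add_neg, NormedSpace.exp_add, hw, hx, mul_assoc,
    ← NormedSpace.exp_add, add_neg_cancel, NormedSpace.exp_zero, mul_one]

theorem mem_range_exp_of_countable_spectrum [NormedAlgebra ℂ A] {a : A} (ha : IsUnit a)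
    (hsp : (spectrum ℂ a).Countable) : a ∈ range (exp : A → A) := by
  set line : ℂ → A := fun z => 1 + z • (a - 1)
  set U : Set ℂ := {z | IsUnit (line z)}
  have hU : Uᶜ.Countable := (hsp.image fun r => (1 - r)⁻¹).mono fun z hz =>
    show z ∈ (fun r : ℂ => (1 - r)⁻¹) '' _ from
      ⟨1 - z⁻¹, one_sub_inv_mem_spectrum_of_not_isUnit hz, by simp⟩
  have hconn : IsPreconnected (line '' U) := by
    have := hU.isConnected_compl_of_one_lt_rank (by simp)
    rw [compl_compl] at this
    exact this.isPreconnected.image _ (by fun_prop)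
  have hcover : line '' U ⊆ range exp ∪ ({u | IsUnit u} \ range exp) := by
    rintro _ ⟨z, hz, rfl⟩
    exact or_and_left.2 ⟨.inr hz, em _⟩
  refine hconn.subset_left_of_subset_union isOpen_range_exp isOpen_setOf_isUnit_diff_range_exp
    disjoint_sdiff_right hcover ⟨1, ⟨0, ?_, ?_⟩, 0, NormedSpace.exp_zero⟩ ⟨1, ?_, ?_⟩
  all_goals simp [U, line, ha]

end Commutative

section Banach

variable {A : Type*} [NormedRing A] [NormedAlgebra ℂ A] [CompleteSpace A]

theorem exists_mem_centralizer_centralizer_exp_eq {a : A} (ha : IsUnit a)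
    (hsp : (spectrum ℂ a).Countable) :
    ∃ x ∈ Subalgebra.centralizer ℂ ({a} : Set A).centralizer, exp x = a := by
  let _ : NormedAlgebra ℚ A := .restrictScalars ℚ ℂ A
  set B := Subalgebra.centralizer ℂ ({a} : Set A).centralizer
  let _ : NormedAlgebra ℚ B := .restrictScalars ℚ ℂ B
  have hcomm : ∀ x y : B, x * y = y * x := fun x y => Subtype.ext <|
    Set.centralizer_centralizer_comm_of_comm (by simp) _ x.2 _ y.2
  let _ : NormedCommRing B := { (inferInstance : NormedRing B) with mul_comm := hcomm }
  have : CompleteSpace B := (Set.isClosed_centralizer _).completeSpace_coe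
  set b : B := ⟨a, Set.subset_centralizer_centralizer rfl⟩
  obtain ⟨x, hx⟩ := mem_range_exp_of_countable_spectrum (a := b)
    (isUnit_centralizer_iff.2 ha) (by rwa [spectrum_centralizer_eq])
  refine ⟨x, x.2, ?_⟩
  rw [← Subalgebra.coe_val, ← map_exp B.val continuous_subtype_val, hx]
  rfl

theorem exp_smul_of_isIdempotentElem {p : A} (hp : IsIdempotentElem p) (z : ℂ) :
    exp (z • p) = 1 + (Complex.exp z - 1) • p := by
  have hterm : ∀ n : ℕ, (n.factorial⁻¹ : ℂ) • (z • p) ^ n =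
      (if n = 0 then 1 - p else 0) + ((n.factorial⁻¹ : ℂ) • z ^ n) • p := by
    rintro (_ | n)
    · simp
    · simp [smul_pow, hp.pow_succ_eq, smul_smul]
  have hsum : HasSum (fun n : ℕ => (n.factorial⁻¹ : ℂ) • (z • p) ^ n)
      ((1 - p) + Complex.exp z • p) := by
    simp only [hterm, Complex.exp_eq_exp_ℂ]
    exact (hasSum_ite_eq 0 (1 - p)).add
      ((exp_series_hasSum_exp' (𝕂 := ℂ) z).smul_const p)
  rw [(exp_series_hasSum_exp' (𝕂 := ℂ) (z • p)).unique hsum]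
  module

end Banach

section Star

open scoped ComplexStarModule

variable {A : Type*} [NormedRing A] [NormedAlgebra ℂ A] [CompleteSpace A] [StarRing A]
  [ContinuousStar A] [StarModule ℂ A]

theorem exp_eq_exp_realPart_mul_expUnitary (x : A) [IsStarNormal x] :
    exp x = exp (ℜ x : A) * selfAdjoint.expUnitary (ℑ x) := by
  let _ : NormedAlgebra ℚ A := .restrictScalars ℚ ℂ A
  rw [selfAdjoint.expUnitary_coe,
    ← exp_add_of_commute ((Commute.realPart_imaginaryPart x).smul_right I),
    realPart_add_I_smul_imaginaryPart]

theorem exists_expUnitary_eq_of_mul_self_eq_one {s : A} (hs : IsSelfAdjoint s) (hss : s * s = 1) :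
    ∃ y : selfAdjoint A, selfAdjoint.expUnitary y = s ∧ ∀ b, Commute s b → Commute (y : A) b := by
  set p : A := (2⁻¹ : ℝ) • (1 - s) with hp
  have hidem : IsIdempotentElem p := by
    rw [IsIdempotentElem, hp, smul_mul_smul_comm, mul_sub, sub_mul, sub_mul, hss]
    simp only [one_mul, mul_one]
    module
  have hself : IsSelfAdjoint p := .smul (.all _) ((IsSelfAdjoint.one A).sub hs)
  refine ⟨Real.pi • ⟨p, hself⟩, ?_, fun b hb =>
    (((Commute.one_left b).sub_left hb).smul_left _).smul_left _⟩
  rw [selfAdjoint.expUnitary_coe, selfAdjoint.val_smul, ← Complex.coe_smul, smul_smul, mul_comm I,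
    exp_smul_of_isIdempotentElem hidem, Complex.exp_pi_mul_I, hp]
  module

theorem exists_expUnitary_eq_exp {x : A} [IsStarNormal x] (hx : exp x ∈ unitary A) :
    ∃ y : selfAdjoint A, selfAdjoint.expUnitary y = exp x := by
  let _ : NormedAlgebra ℚ A := .restrictScalars ℚ ℂ A
  set s : A := exp (ℜ x : A)
  set v := selfAdjoint.expUnitary (ℑ x)
  have hxs : exp x = s * v := exp_eq_exp_realPart_mul_expUnitary x
  have hself : IsSelfAdjoint s := (ℜ x).2.exp
  have hss : s * s = 1 := by
    have hsu : s ∈ unitary A := by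
      have : s = exp x * (star v : unitary A) := by
        rw [hxs, mul_assoc, Unitary.coe_star, Unitary.mul_star_self_of_mem v.2, mul_one]
      exact this ▸ mul_mem hx (star v).2
    simpa only [hself.star_eq] using Unitary.star_mul_self_of_mem hsu
  obtain ⟨y, hys, hycomm⟩ := exists_expUnitary_eq_of_mul_self_eq_one hself hss
  have hcomm : Commute (y : A) (ℑ x) := hycomm _ (Commute.realPart_imaginaryPart x).exp_left
  refine ⟨y + ℑ x, ?_⟩
  rw [hcomm.expUnitary_add, Submonoid.coe_mul, hys, hxs]

theorem exists_expUnitary_eq (u : unitary A) (hu : (spectrum ℂ (u : A)).Countable) :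
    ∃ y : selfAdjoint A, selfAdjoint.expUnitary y = u := by
  obtain ⟨x, hx, hxu⟩ := exists_mem_centralizer_centralizer_exp_eq Unitary.isUnit_coe hu
  have : IsStarNormal (u : A) := ⟨commute_unitary_star_self u.2⟩
  have := isStarNormal_of_mem_centralizer_centralizer hx
  obtain ⟨y, hy⟩ := exists_expUnitary_eq_exp (hxu.symm ▸ u.2)
  exact ⟨y, Subtype.ext (hy.trans hxu)⟩

theorem exists_isOneParameterGroup_forall_mem_unitary {u : A} (hu : u ∈ unitary A)
    (hsp : (spectrum ℂ u).Countable) :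
    ∃ T : ℝ → A, IsOneParameterGroup T ∧ T 1 = u ∧ ∀ t, T t ∈ unitary A := by
  obtain ⟨y, hy⟩ := exists_expUnitary_eq ⟨u, hu⟩ hsp
  refine ⟨_, isOneParameterGroup_exp_smul (I • (y : A)), ?_, fun t => ?_⟩
  · simp only [one_smul, ← selfAdjoint.expUnitary_coe, hy]
  · rw [smul_comm, ← selfAdjoint.val_smul, ← selfAdjoint.expUnitary_coe]
    exact SetLike.coe_mem _

end Star

end Exponential

section TwistedStar

/-- For a self-adjoint square root `J` of `1`, the involution `a ↦ J a⋆ J`: the adjoint with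
respect to the possibly indefinite form represented by `J`. -/
abbrev twistedStarRing {A : Type*} [Ring A] [StarRing A] {J : A} (hJ : IsSelfAdjoint J)
    (hJJ : J * J = 1) : StarRing A where
  star a := J * star a * J
  star_involutive a := by
    simp only [star_mul, hJ.star_eq, star_star]
    rw [← mul_assoc, ← mul_assoc, hJJ, one_mul, mul_assoc, hJJ, mul_one]
  star_mul a b := by
    rw [star_mul, mul_assoc (J * star b), ← mul_assoc J (J * star a), ← mul_assoc J J, hJJ, one_mul]
    simp only [mul_assoc]
  star_add a b := by rw [star_add, mul_add, add_mul]

theorem mem_unitary_twistedStarRing_iff {A : Type*} [Ring A] [StarRing A] {J a : A}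
    (hJ : IsSelfAdjoint J) (hJJ : J * J = 1) :
    a ∈ @unitary A _ (twistedStarRing hJ hJJ).toStarMul ↔ IsUnit a ∧ star a * J * a = J := by
  have hleft : J * star a * J * a = 1 ↔ star a * J * a = J := by
    have hfactor : J * star a * J * a = J * (star a * J * a) := by simp only [mul_assoc]
    refine ⟨fun h => ?_, fun h => by rw [hfactor, h, hJJ]⟩
    rw [← one_mul (star a * J * a), ← hJJ, mul_assoc, ← hfactor, h, mul_one]
  have hright (ha : IsUnit a) (h : J * star a * J * a = 1) : a * (J * star a * J) = 1 :=
    ha.mul_right_cancel (by rw [mul_assoc, h, mul_one, one_mul])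
  exact (@Unitary.mem_iff A _ (twistedStarRing hJ hJJ).toStarMul a).trans
    ⟨fun ⟨h, h'⟩ => ⟨isUnit_iff_exists.2 ⟨_, h', h⟩, hleft.1 h⟩,
      fun ⟨ha, h⟩ => ⟨hleft.2 h, hright ha (hleft.2 h)⟩⟩

theorem exists_isOneParameterGroup_forall_star_mul_mul {A : Type*} [NormedRing A]
    [NormedAlgebra ℂ A] [CompleteSpace A] [StarRing A] [ContinuousStar A] [StarModule ℂ A]
    {J a : A} (hJ : IsSelfAdjoint J) (hJJ : J * J = 1) (ha : IsUnit a)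
    (hsp : (spectrum ℂ a).Countable) (haJ : star a * J * a = J) :
    ∃ T : ℝ → A, IsOneParameterGroup T ∧ T 1 = a ∧ ∀ t, star (T t) * J * T t = J := by
  have hcont : @ContinuousStar A _ (twistedStarRing hJ hJJ).toStar :=
    @ContinuousStar.mk A _ (twistedStarRing hJ hJJ).toStar
      (show Continuous fun b : A => J * star b * J by fun_prop)
  have hmod : @StarModule ℂ A _ (twistedStarRing hJ hJJ).toStar _ :=
    @StarModule.mk ℂ A _ (twistedStarRing hJ hJJ).toStar _ fun r b =>
      show J * star (r • b) * J = star r • (J * star b * J) by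
        rw [star_smul, mul_smul_comm, smul_mul_assoc]
  obtain ⟨T, hT, hT1, hTu⟩ := @exists_isOneParameterGroup_forall_mem_unitary A _ _ _
    (twistedStarRing hJ hJJ) hcont hmod a
    ((mem_unitary_twistedStarRing_iff hJ hJJ).2 ⟨ha, haJ⟩) hsp
  exact ⟨T, hT, hT1, fun t => ((mem_unitary_twistedStarRing_iff hJ hJJ).1 (hTu t)).2⟩

end TwistedStar

section LorentzForm

open scoped InnerProductSpace

/-- The Hilbert space `E × ℂ` of homogeneous coordinates for `E`. -/
abbrev HomogeneousSpace (E : Type*) : Type _ := WithLp 2 (E × ℂ)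

variable {E : Type*} [NormedAddCommGroup E] [InnerProductSpace ℂ E]

/-- The indefinite form `‖z‖² - |w|²`; the unit ball of `E` is the set of negative lines. -/
def lorentzForm (x : HomogeneousSpace E) : ℝ := ‖x.fst‖ ^ 2 - ‖x.snd‖ ^ 2

/-- The block diagonal operator `(z, w) ↦ (A z, c w)`. -/
def blockDiagonal (A : E →L[ℂ] E) (c : ℂ) : HomogeneousSpace E →L[ℂ] HomogeneousSpace E :=
  (WithLp.prodContinuousLinearEquiv 2 ℂ E ℂ).symm.toContinuousLinearMap ∘L
    ((A ∘L WithLp.fstL 2 ℂ E ℂ).prod (c • WithLp.sndL 2 ℂ E ℂ))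

variable (E) in
/-- The operator `(z, w) ↦ (z, -w)` representing `lorentzForm`. -/
def lorentzSign : HomogeneousSpace E →L[ℂ] HomogeneousSpace E := blockDiagonal 1 (-1)

/-- Operators preserving `lorentzForm`. They are not required to be surjective. -/
def IsLorentzIsometry (M : HomogeneousSpace E →L[ℂ] HomogeneousSpace E) : Prop :=
  ∀ x, lorentzForm (M x) = lorentzForm x

theorem blockDiagonal_apply (A : E →L[ℂ] E) (c : ℂ) (x : HomogeneousSpace E) :
    blockDiagonal A c x = WithLp.toLp 2 (A x.fst, c * x.snd) := rfl

theorem lorentzSign_mul_self : lorentzSign E * lorentzSign E = 1 := by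
  ext1 x
  apply WithLp.ofLp_injective
  ext1 <;> simp [lorentzSign, blockDiagonal_apply]

theorem inner_lorentzSign (x y : HomogeneousSpace E) :
    ⟪lorentzSign E x, y⟫_ℂ = ⟪x.fst, y.fst⟫_ℂ - ⟪x.snd, y.snd⟫_ℂ := by
  simp [lorentzSign, blockDiagonal_apply, WithLp.prod_inner_apply, sub_eq_add_neg]

theorem inner_lorentzSign_self (x : HomogeneousSpace E) :
    ⟪lorentzSign E x, x⟫_ℂ = lorentzForm x := by
  rw [inner_lorentzSign, inner_self_eq_norm_sq_to_K, inner_self_eq_norm_sq_to_K, lorentzForm]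
  push_cast
  rfl

theorem conj_inner_lorentzSign (x y : HomogeneousSpace E) :
    starRingEnd ℂ ⟪lorentzSign E x, y⟫_ℂ = ⟪lorentzSign E y, x⟫_ℂ := by
  simp only [inner_lorentzSign, map_sub, inner_conj_symm]

theorem isSelfAdjoint_lorentzSign [CompleteSpace E] : IsSelfAdjoint (lorentzSign E) := by
  refine ContinuousLinearMap.isSelfAdjoint_iff_isSymmetric.2 fun x y => ?_
  rw [ContinuousLinearMap.coe_coe, ← conj_inner_lorentzSign, inner_conj_symm]

theorem isLorentzIsometry_iff_star_mul_mul [CompleteSpace E]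
    {M : HomogeneousSpace E →L[ℂ] HomogeneousSpace E} :
    IsLorentzIsometry M ↔ star M * lorentzSign E * M = lorentzSign E := by
  have hinner (x : HomogeneousSpace E) :
      ⟪(star M * lorentzSign E * M) x, x⟫_ℂ = lorentzForm (M x) := by
    rw [← inner_lorentzSign_self, ContinuousLinearMap.star_eq_adjoint]
    simp [ContinuousLinearMap.adjoint_inner_left]
  rw [← ContinuousLinearMap.coe_inj]
  refine Iff.trans (forall_congr' fun x => ?_) (ext_inner_map _ _)
  rw [ContinuousLinearMap.coe_coe, ContinuousLinearMap.coe_coe, hinner, inner_lorentzSign_self,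
    Complex.ofReal_inj]

theorem IsLorentzIsometry.mul {M M' : HomogeneousSpace E →L[ℂ] HomogeneousSpace E}
    (hM : IsLorentzIsometry M) (hM' : IsLorentzIsometry M') : IsLorentzIsometry (M * M') :=
  fun x => (hM (M' x)).trans (hM' x)

theorem isLorentzIsometry_blockDiagonal {A : E →L[ℂ] E} (hA : ∀ z, ‖A z‖ = ‖z‖) {c : ℂ}
    (hc : ‖c‖ = 1) : IsLorentzIsometry (blockDiagonal A c) := fun x => by
  simp [blockDiagonal_apply, lorentzForm, hA, hc]

theorem IsLorentzIsometry.isUnit [FiniteDimensional ℂ E]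
    {M : HomogeneousSpace E →L[ℂ] HomogeneousSpace E} (hM : IsLorentzIsometry M) : IsUnit M := by
  have : CompleteSpace E := FiniteDimensional.complete ℂ E
  have : IsNoetherianRing (HomogeneousSpace E →L[ℂ] HomogeneousSpace E) :=
    isNoetherian_of_tower ℂ inferInstance
  refine .of_mul_eq_one_right (lorentzSign E * (star M * lorentzSign E)) ?_
  rw [mul_assoc, isLorentzIsometry_iff_star_mul_mul.1 hM, lorentzSign_mul_self]

theorem finite_spectrum_of_finiteDimensional {𝕜 F : Type*} [NontriviallyNormedField 𝕜]
    [CompleteSpace 𝕜] [NormedAddCommGroup F] [NormedSpace 𝕜 F] [FiniteDimensional 𝕜 F]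
    (M : F →L[𝕜] F) : (spectrum 𝕜 M).Finite := by
  rw [← AlgEquiv.spectrum_eq (Module.End.toContinuousLinearMap F).symm M]
  exact Module.End.finite_spectrum _

theorem IsLorentzIsometry.exists_isOneParameterGroup [FiniteDimensional ℂ E]
    {M : HomogeneousSpace E →L[ℂ] HomogeneousSpace E} (hM : IsLorentzIsometry M) :
    ∃ T : ℝ → HomogeneousSpace E →L[ℂ] HomogeneousSpace E,
      IsOneParameterGroup T ∧ T 1 = M ∧ ∀ t, IsLorentzIsometry (T t) := by
  have : CompleteSpace E := FiniteDimensional.complete ℂ E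
  simp only [isLorentzIsometry_iff_star_mul_mul]
  exact exists_isOneParameterGroup_forall_star_mul_mul isSelfAdjoint_lorentzSign
    lorentzSign_mul_self hM.isUnit (finite_spectrum_of_finiteDimensional M).countable
    (isLorentzIsometry_iff_star_mul_mul.1 hM)

/-- The reflection along `u` with respect to `lorentzForm`; it is the identity if
`lorentzForm u = 0`. -/
def lorentzReflection (u : HomogeneousSpace E) : HomogeneousSpace E →L[ℂ] HomogeneousSpace E :=
  1 - (2 / (lorentzForm u : ℂ)) • (innerSL ℂ (lorentzSign E u)).smulRight u

theorem lorentzReflection_apply (u x : HomogeneousSpace E) :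
    lorentzReflection u x = x - (2 / (lorentzForm u : ℂ) * ⟪lorentzSign E u, x⟫_ℂ) • u := by
  simp [lorentzReflection, smul_smul]

theorem lorentzReflection_mul_self (u : HomogeneousSpace E) :
    lorentzReflection u * lorentzReflection u = 1 := by
  ext1 x
  rw [mul_apply_eq_comp, lorentzReflection_apply, lorentzReflection_apply, inner_sub_right,
    inner_smul_right, inner_lorentzSign_self, one_apply_eq_self, sub_sub, sub_eq_self, ← add_smul]
  convert zero_smul ℂ u
  rcases eq_or_ne (lorentzForm u : ℂ) 0 with hu | hu
  · simp [hu]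
  · field_simp
    ring

theorem isLorentzIsometry_lorentzReflection (u : HomogeneousSpace E) :
    IsLorentzIsometry (lorentzReflection u) := fun x => by
  rw [← Complex.ofReal_inj, ← inner_lorentzSign_self, ← inner_lorentzSign_self,
    lorentzReflection_apply, map_sub, map_smul, inner_sub_left, inner_sub_right, inner_sub_right,
    inner_smul_left, inner_smul_left, inner_smul_right, inner_smul_right, inner_lorentzSign_self u,
    ← conj_inner_lorentzSign u x]
  simp only [map_mul, map_div₀, Complex.conj_ofReal, map_ofNat]
  rcases eq_or_ne (lorentzForm u : ℂ) 0 with hu | hu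
  · simp [hu]
  · field_simp
    ring

theorem lorentzReflection_add_apply_left {x y : HomogeneousSpace E}
    (hform : lorentzForm x = lorentzForm y)
    (hinner : ⟪lorentzSign E x, y⟫_ℂ = ⟪lorentzSign E y, x⟫_ℂ)
    (hne : lorentzForm (x + y) ≠ 0) : lorentzReflection (x + y) x = -y := by
  have hadd : (lorentzForm (x + y) : ℂ) = 2 * ⟪lorentzSign E (x + y), x⟫_ℂ := by
    rw [← inner_lorentzSign_self, map_add, inner_add_left, inner_add_right, inner_add_right,
      inner_add_left, inner_lorentzSign_self, inner_lorentzSign_self, hinner, hform]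
    ring
  have hcoeff : 2 / (lorentzForm (x + y) : ℂ) * ⟪lorentzSign E (x + y), x⟫_ℂ = 1 := by
    rw [div_mul_eq_mul_div, ← hadd, div_self (mod_cast hne)]
  rw [lorentzReflection_apply, hcoeff]
  module

end LorentzForm

section LinearFractional

variable {E : Type*} [NormedAddCommGroup E] [InnerProductSpace ℂ E]
  {M M' : HomogeneousSpace E →L[ℂ] HomogeneousSpace E} {z : E}

/-- The point `(z, 1)`, giving homogeneous coordinates of `z`. -/
def homogenize (z : E) : HomogeneousSpace E := WithLp.toLp 2 (z, 1)

/-- The linear fractional map of `E` induced by an operator on `E × ℂ`, with the junk value `0`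
where the denominator vanishes. -/
def linearFractional (M : HomogeneousSpace E →L[ℂ] HomogeneousSpace E) (z : E) : E :=
  (M (homogenize z)).snd⁻¹ • (M (homogenize z)).fst

theorem linearFractional_eq_of_map_eq_smul {c : ℂ} {w : E} (hc : c ≠ 0)
    (h : M (homogenize z) = c • homogenize w) : linearFractional M z = w := by
  rw [linearFractional, h]
  simp [homogenize, smul_smul, inv_mul_cancel₀ hc]

theorem map_homogenize_eq_smul (h : (M (homogenize z)).snd ≠ 0) :
    M (homogenize z) = (M (homogenize z)).snd • homogenize (linearFractional M z) := by
  apply WithLp.ofLp_injective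
  ext1
  · change _ = (M (homogenize z)).snd • linearFractional M z
    rw [linearFractional, smul_inv_smul₀ h]
    rfl
  · simp [homogenize]

theorem linearFractional_one (z : E) : linearFractional 1 z = z :=
  linearFractional_eq_of_map_eq_smul one_ne_zero (by simp)

theorem linearFractional_blockDiagonal_one (A : E →L[ℂ] E) (z : E) :
    linearFractional (blockDiagonal A 1) z = A z :=
  linearFractional_eq_of_map_eq_smul one_ne_zero (by simp [blockDiagonal_apply, homogenize])

theorem linearFractional_mul (h' : (M' (homogenize z)).snd ≠ 0)
    (h : (M (homogenize (linearFractional M' z))).snd ≠ 0) :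
    linearFractional (M * M') z = linearFractional M (linearFractional M' z) :=
  linearFractional_eq_of_map_eq_smul (mul_ne_zero h' h) <| by
    rw [mul_apply_eq_comp, map_homogenize_eq_smul h', map_smul, map_homogenize_eq_smul h,
      smul_smul]
    simp [homogenize]

theorem differentiable_homogenize : Differentiable ℂ (homogenize (E := E)) :=
  (WithLp.prodContinuousLinearEquiv 2 ℂ E ℂ).symm.differentiable.comp
    (differentiable_id.prodMk (differentiable_const 1))

theorem lorentzForm_homogenize_neg_iff {E : Type*} [NormedAddCommGroup E] {z : E} :
    lorentzForm (homogenize z) < 0 ↔ z ∈ Metric.ball 0 1 := by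
  simp [lorentzForm, homogenize]

namespace IsLorentzIsometry

theorem snd_map_homogenize_ne_zero (hM : IsLorentzIsometry M) (hz : z ∈ Metric.ball 0 1) :
    (M (homogenize z)).snd ≠ 0 := by
  intro h
  have hneg := lorentzForm_homogenize_neg_iff.2 hz
  rw [← hM, lorentzForm, h, norm_zero] at hneg
  nlinarith [sq_nonneg ‖(M (homogenize z)).fst‖]

theorem mapsTo_linearFractional (hM : IsLorentzIsometry M) :
    MapsTo (linearFractional M) (Metric.ball 0 1) (Metric.ball 0 1) := fun z hz => by
  have hpos := norm_pos_iff.2 (hM.snd_map_homogenize_ne_zero hz)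
  have hneg := lorentzForm_homogenize_neg_iff.2 hz
  rw [← hM, lorentzForm, sub_neg] at hneg
  rw [mem_ball_zero_iff, linearFractional, norm_smul, norm_inv, inv_mul_lt_iff₀ hpos, mul_one]
  exact lt_of_pow_lt_pow_left₀ 2 hpos.le hneg

theorem linearFractional_mul (hM : IsLorentzIsometry M) (hM' : IsLorentzIsometry M')
    (hz : z ∈ Metric.ball 0 1) :
    linearFractional (M * M') z = linearFractional M (linearFractional M' z) :=
  _root_.linearFractional_mul (hM'.snd_map_homogenize_ne_zero hz)
    (hM.snd_map_homogenize_ne_zero (hM'.mapsTo_linearFractional hz))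

theorem differentiableOn_linearFractional (hM : IsLorentzIsometry M) :
    DifferentiableOn ℂ (linearFractional M) (Metric.ball 0 1) := by
  have hd := M.differentiable.comp differentiable_homogenize
  exact (((WithLp.sndL 2 ℂ E ℂ).differentiable.comp hd).differentiableOn.inv
    fun z hz => hM.snd_map_homogenize_ne_zero hz).smul
      ((WithLp.fstL 2 ℂ E ℂ).differentiable.comp hd).differentiableOn

end IsLorentzIsometry

theorem continuousOn_linearFractional_uncurry {X : Type*} [TopologicalSpace X]
    {T : X → HomogeneousSpace E →L[ℂ] HomogeneousSpace E} (hT : Continuous T)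
    (hTiso : ∀ t, IsLorentzIsometry (T t)) :
    ContinuousOn (fun p : X × E => linearFractional (T p.1) p.2) (univ ×ˢ Metric.ball 0 1) := by
  have hcont : Continuous fun p : X × E => T p.1 (homogenize p.2) :=
    (hT.comp continuous_fst).clm_apply (differentiable_homogenize.continuous.comp continuous_snd)
  exact (((WithLp.sndL 2 ℂ E ℂ).continuous.comp hcont).continuousOn.inv₀
    fun p hp => (hTiso p.1).snd_map_homogenize_ne_zero hp.2).smul
      ((WithLp.fstL 2 ℂ E ℂ).continuous.comp hcont).continuousOn

theorem exists_isLorentzIsometry_mul_self_linearFractional_zero_eq {b : E}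
    (hb : b ∈ Metric.ball 0 1) :
    ∃ R : HomogeneousSpace E →L[ℂ] HomogeneousSpace E,
      IsLorentzIsometry R ∧ R * R = 1 ∧ linearFractional R 0 = b := by
  have hpos : 0 < 1 - ‖b‖ ^ 2 := by simpa using hb
  set σ : ℝ := √(1 - ‖b‖ ^ 2)
  have hσ0 : 0 < σ := Real.sqrt_pos.2 hpos
  have hσ2 : σ ^ 2 = 1 - ‖b‖ ^ 2 := Real.sq_sqrt hpos.le
  set x : HomogeneousSpace E := (σ : ℂ) • homogenize 0 with hx
  have hform : lorentzForm x = lorentzForm (homogenize b) := by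
    simp [lorentzForm, x, homogenize, hσ2]
  have hinner : inner ℂ (lorentzSign E x) (homogenize b) =
      inner ℂ (lorentzSign E (homogenize b)) x := by
    simp only [inner_lorentzSign]
    simp [x, homogenize]
  have hne : lorentzForm (x + homogenize b) ≠ 0 := by
    have hnorm : ‖(σ : ℂ) + 1‖ = σ + 1 := by
      exact_mod_cast Complex.norm_of_nonneg (by positivity : 0 ≤ σ + 1)
    have : lorentzForm (x + homogenize b) = ‖b‖ ^ 2 - (σ + 1) ^ 2 := by
      simp [lorentzForm, x, homogenize, hnorm]
    nlinarith
  refine ⟨lorentzReflection (x + homogenize b), isLorentzIsometry_lorentzReflection _,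
    lorentzReflection_mul_self _, ?_⟩
  have hσ : (σ : ℂ) ≠ 0 := mod_cast hσ0.ne'
  refine linearFractional_eq_of_map_eq_smul (neg_ne_zero.2 (inv_ne_zero hσ)) ?_
  rw [neg_smul, ← smul_neg, eq_inv_smul_iff₀ hσ, ← map_smul, ← hx]
  exact lorentzReflection_add_apply_left hform hinner hne

end LinearFractional

section Rigidity

variable {E F : Type*} [NormedAddCommGroup E] [NormedSpace ℂ E] [NormedAddCommGroup F]
  [NormedSpace ℂ F] {g : E → F} {z : E}

theorem map_smul_of_forall_mem_ball_norm_map_eq [StrictConvexSpace ℝ F]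
    (hg : DifferentiableOn ℂ g (Metric.ball 0 1)) (hnorm : ∀ z ∈ Metric.ball 0 1, ‖g z‖ = ‖z‖)
    (hz : z ∈ Metric.ball 0 1) (hz0 : z ≠ 0) {c : ℂ} (hc : c ∈ Metric.ball 0 ‖z‖⁻¹) :
    g (c • z) = c • g z := by
  have hpos : 0 < ‖z‖ := norm_pos_iff.2 hz0
  have hg0 : g 0 = 0 := by simpa using hnorm 0 (by simp)
  set h : ℂ → F := fun c => g (c • z)
  have hh0 : h 0 = 0 := by simp [h, hg0]
  have hball : MapsTo (· • z) (Metric.ball (0 : ℂ) ‖z‖⁻¹) (Metric.ball 0 1) := fun c hc => by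
    rw [mem_ball_zero_iff] at hc ⊢
    rwa [norm_smul, ← lt_inv_mul_iff₀' hpos, mul_one]
  have hdiff : DifferentiableOn ℂ h (Metric.ball 0 ‖z‖⁻¹) := hg.comp (by fun_prop) hball
  have hmaps : MapsTo h (Metric.ball 0 ‖z‖⁻¹) (Metric.closedBall (h 0) 1) := fun c hc => by
    rw [hh0, mem_closedBall_zero_iff, hnorm _ (hball hc)]
    exact (mem_ball_zero_iff.1 (hball hc)).le
  have hone : (1 : ℂ) ∈ Metric.ball (0 : ℂ) ‖z‖⁻¹ := by
    simpa using (one_lt_inv₀ hpos).2 (mem_ball_zero_iff.1 hz)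
  have hslope : dslope h 0 1 = g z := by
    rw [dslope_of_ne _ one_ne_zero, slope_def_module]
    simp [h, hg0]
  have haffine := Complex.affine_of_mapsTo_ball_of_norm_dslope_eq_div
    hdiff hmaps hone (by rw [hslope, hnorm z hz, one_div, inv_inv]) hc
  simpa only [hh0, hslope, zero_add, sub_zero] using haffine

theorem eq_fderiv_zero_of_forall_mem_ball_norm_map_eq [StrictConvexSpace ℝ F]
    (hg : DifferentiableOn ℂ g (Metric.ball 0 1)) (hnorm : ∀ z ∈ Metric.ball 0 1, ‖g z‖ = ‖z‖)
    (hz : z ∈ Metric.ball 0 1) : g z = fderiv ℂ g 0 z := by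
  rcases eq_or_ne z 0 with rfl | hz0
  · simpa using hnorm 0 hz
  have hline : HasLineDerivAt ℂ g (g z) 0 z := by
    have hlinear : HasDerivAt (fun c : ℂ => c • g z) (g z) 0 := by
      simpa using (hasDerivAt_id (0 : ℂ)).smul_const (g z)
    refine hlinear.congr_of_eventuallyEq ?_
    filter_upwards [Metric.ball_mem_nhds (0 : ℂ) (inv_pos.2 (norm_pos_iff.2 hz0))] with c hc
    rw [zero_add, map_smul_of_forall_mem_ball_norm_map_eq hg hnorm hz hz0 hc]
  have hdiff := hg.differentiableAt (Metric.ball_mem_nhds (0 : E) one_pos)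
  exact hline.unique (hdiff.hasFDerivAt.hasLineDerivAt z)

theorem norm_map_eq_of_leftInvOn_ball {g' : F → E}
    (hg : DifferentiableOn ℂ g (Metric.ball 0 1))
    (hgm : MapsTo g (Metric.ball 0 1) (Metric.ball 0 1))
    (hg' : DifferentiableOn ℂ g' (Metric.ball 0 1))
    (hgm' : MapsTo g' (Metric.ball 0 1) (Metric.ball 0 1))
    (hleft : LeftInvOn g' g (Metric.ball 0 1)) (hg0 : g 0 = 0) (hz : z ∈ Metric.ball 0 1) :
    ‖g z‖ = ‖z‖ := by
  have hg0' : g' 0 = 0 := by simpa [hg0] using hleft (show (0 : E) ∈ Metric.ball 0 1 by simp)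
  refine le_antisymm (Complex.norm_le_norm_of_mapsTo_ball hg
    (hgm.mono_right Metric.ball_subset_closedBall) hg0 (mem_ball_zero_iff.1 hz)) ?_
  have hle := Complex.norm_le_norm_of_mapsTo_ball hg'
    (hgm'.mono_right Metric.ball_subset_closedBall) hg0' (mem_ball_zero_iff.1 (hgm hz))
  rwa [hleft hz] at hle

theorem norm_map_of_forall_mem_ball_norm_map_eq {𝕜 V W : Type*} [RCLike 𝕜]
    [SeminormedAddCommGroup V] [NormedSpace 𝕜 V] [SeminormedAddCommGroup W] [NormedSpace 𝕜 W]
    {A : V →ₗ[𝕜] W} (hA : ∀ z ∈ Metric.ball 0 1, ‖A z‖ = ‖z‖) (z : V) : ‖A z‖ = ‖z‖ := by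
  have hpos : 0 < ‖z‖ + 1 := by positivity
  have hmem : (((‖z‖ + 1 : ℝ) : 𝕜)⁻¹ • z) ∈ Metric.ball 0 1 := by
    rw [mem_ball_zero_iff, norm_smul, norm_inv, RCLike.norm_of_nonneg hpos.le,
      inv_mul_lt_iff₀ hpos]
    linarith
  have hscaled := hA _ hmem
  rw [map_smul, norm_smul, norm_smul] at hscaled
  exact mul_left_cancel₀ (norm_ne_zero_iff.2 (inv_ne_zero (mod_cast hpos.ne'))) hscaled

end Rigidity

section Ball

variable {E : Type*} [NormedAddCommGroup E] [InnerProductSpace ℂ E]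

theorem strictConvexSpace_of_complex_innerProductSpace : StrictConvexSpace ℝ E :=
  let _ := InnerProductSpace.complexToReal (G := E)
  inferInstance

theorem exists_isLorentzIsometry_eqOn_linearFractional {φ ψ : E → E}
    (hφ : DifferentiableOn ℂ φ (Metric.ball 0 1))
    (hφm : MapsTo φ (Metric.ball 0 1) (Metric.ball 0 1))
    (hψ : DifferentiableOn ℂ ψ (Metric.ball 0 1))
    (hψm : MapsTo ψ (Metric.ball 0 1) (Metric.ball 0 1))
    (hleft : LeftInvOn ψ φ (Metric.ball 0 1)) :
    ∃ M : HomogeneousSpace E →L[ℂ] HomogeneousSpace E,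
      IsLorentzIsometry M ∧ EqOn (linearFractional M) φ (Metric.ball 0 1) := by
  have : StrictConvexSpace ℝ E := strictConvexSpace_of_complex_innerProductSpace
  have h0 : (0 : E) ∈ Metric.ball 0 1 := by simp
  obtain ⟨R, hR, hRR, hR0⟩ := exists_isLorentzIsometry_mul_self_linearFractional_zero_eq (hφm h0)
  have hinv : LeftInvOn (linearFractional R) (linearFractional R) (Metric.ball 0 1) :=
    fun z hz => by rw [← hR.linearFractional_mul hR hz, hRR, linearFractional_one]
  set g : E → E := linearFractional R ∘ φ with hg
  have hgd : DifferentiableOn ℂ g (Metric.ball 0 1) :=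
    hR.differentiableOn_linearFractional.comp hφ hφm
  have hg0 : g 0 = 0 := by rw [hg, Function.comp_apply, ← hR0, hinv h0]
  have hnorm : ∀ z ∈ Metric.ball 0 1, ‖g z‖ = ‖z‖ := fun z hz =>
    norm_map_eq_of_leftInvOn_ball hgd (hR.mapsTo_linearFractional.comp hφm)
      (hψ.comp hR.differentiableOn_linearFractional hR.mapsTo_linearFractional)
      (hψm.comp hR.mapsTo_linearFractional)
      (hleft.comp (hinv.mono hφm.image_subset) (mapsTo_image _ _)) hg0 hz
  set A := fderiv ℂ g 0
  have hgA : EqOn g A (Metric.ball 0 1) := fun z hz =>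
    eq_fderiv_zero_of_forall_mem_ball_norm_map_eq hgd hnorm hz
  have hA : ∀ z, ‖A z‖ = ‖z‖ := norm_map_of_forall_mem_ball_norm_map_eq (A := A.toLinearMap)
    fun z hz => (congrArg norm (hgA hz)).symm.trans (hnorm z hz)
  have hAiso : IsLorentzIsometry (blockDiagonal A 1) := isLorentzIsometry_blockDiagonal hA norm_one
  refine ⟨R * blockDiagonal A 1, hR.mul hAiso, fun z hz => ?_⟩
  rw [hR.linearFractional_mul hAiso hz, linearFractional_blockDiagonal_one, ← hgA hz]
  exact hinv (hφm hz)

end Ball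

section Semigroup

theorem tendstoUniformlyOn_of_continuousOn_uncurry {X Y Z : Type*} [TopologicalSpace X]
    [TopologicalSpace Y] [UniformSpace Z] {f : X → Y → Z} {s : Set X} {K : Set Y} {x : X}
    (hK : IsCompact K) (hf : ContinuousOn f.uncurry (s ×ˢ K)) (hx : x ∈ s) :
    TendstoUniformlyOn f (f x) (nhdsWithin x s) K := fun u hu => by
  obtain ⟨v, hv, hvu⟩ := hK.mem_uniformity_of_prod hf hx (symm_le_uniformity hu)
  exact mem_of_superset hv hvu

variable {E : Type*} [NormedAddCommGroup E]

theorem IsHolSemigroupOn.conj {F : Type*} [NormedSpace ℂ E] [NormedAddCommGroup F]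
    [NormedSpace ℂ F] {U : Set E} {φ : ℝ → E → E} (h : IsHolSemigroupOn U φ) (e : F ≃L[ℂ] E) :
    IsHolSemigroupOn (e ⁻¹' U) fun t z => e.symm (φ t (e z)) := by
  obtain ⟨hm, hd, h0, hadd, hlim⟩ := h
  refine ⟨fun t ht z hz => ?_, fun t ht => ?_, fun z hz => ?_, fun s hs t ht z hz => ?_,
    fun K hK hKc => ?_⟩
  · simpa using hm t ht hz
  · exact e.symm.differentiable.comp_differentiableOn
      ((hd t ht).comp e.differentiable.differentiableOn (mapsTo_preimage e U))
  · simp only [h0 _ hz, e.symm_apply_apply]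
  · simp only [hadd s hs t ht _ hz, e.apply_symm_apply]
  · have hunif := e.symm.toContinuousLinearMap.uniformContinuous.comp_tendstoUniformlyOn
      ((hlim (e '' K) (image_subset_iff.2 hK) (hKc.image e.continuous)).comp e)
    exact (hunif.mono (subset_preimage_image e K)).congr_right fun z _ => by simp

variable [InnerProductSpace ℂ E]

theorem IsOneParameterGroup.isHolSemigroupOn_linearFractional
    {T : ℝ → HomogeneousSpace E →L[ℂ] HomogeneousSpace E} (hT : IsOneParameterGroup T)
    (hTiso : ∀ t, IsLorentzIsometry (T t)) :
    IsHolSemigroupOn (Metric.ball 0 1) fun t => linearFractional (T t) := by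
  have hzero (z : E) : linearFractional (T 0) z = z := by rw [hT.map_zero, linearFractional_one]
  refine ⟨fun t _ => (hTiso t).mapsTo_linearFractional,
    fun t _ => (hTiso t).differentiableOn_linearFractional, fun z _ => hzero z,
    fun s _ t _ z hz => by simp only [hT.map_add, (hTiso s).linearFractional_mul (hTiso t) hz],
    fun K hK hKc => ?_⟩
  have hlim := tendstoUniformlyOn_of_continuousOn_uncurry (f := fun t => linearFractional (T t))
    hKc ((continuousOn_linearFractional_uncurry hT.continuous hTiso).mono
      (prod_mono (subset_univ (Ici 0)) hK)) self_mem_Ici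
  have hlim_id := hlim.congr_right (g := id) fun z _ => hzero z
  exact fun u hu => (hlim_id u hu).filter_mono (nhdsWithin_mono _ Ioi_subset_Ici_self)

theorem exists_isHolSemigroupOn_ball [FiniteDimensional ℂ E] {φ ψ : E → E}
    (hφ : DifferentiableOn ℂ φ (Metric.ball 0 1))
    (hφm : MapsTo φ (Metric.ball 0 1) (Metric.ball 0 1))
    (hψ : DifferentiableOn ℂ ψ (Metric.ball 0 1))
    (hψm : MapsTo ψ (Metric.ball 0 1) (Metric.ball 0 1))
    (hleft : LeftInvOn ψ φ (Metric.ball 0 1)) :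
    ∃ φt : ℝ → E → E, IsHolSemigroupOn (Metric.ball 0 1) φt ∧ EqOn (φt 1) φ (Metric.ball 0 1) := by
  obtain ⟨M, hM, hMφ⟩ := exists_isLorentzIsometry_eqOn_linearFractional hφ hφm hψ hψm hleft
  obtain ⟨T, hT, rfl, hTiso⟩ := hM.exists_isOneParameterGroup
  exact ⟨_, hT.isHolSemigroupOn_linearFractional hTiso, hMφ⟩

end Semigroup

theorem ball_eq_preimage (N : ℕ) :
    Ball N = (EuclideanSpace.equiv (Fin N) ℂ).symm ⁻¹' Metric.ball 0 1 := by
  ext z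
  rw [mem_preimage, mem_ball_zero_iff, ← sq_lt_one_iff₀ (norm_nonneg _), EuclideanSpace.norm_sq_eq]
  rfl

theorem stmt17_general {E F : Type*} [NormedAddCommGroup E] [InnerProductSpace ℂ E]
    [FiniteDimensional ℂ E] [NormedAddCommGroup F] [NormedSpace ℂ F] {U : Set F} {φ ψ : F → F}
    (e : F ≃L[ℂ] E) (hU : U = e ⁻¹' Metric.ball 0 1)
    (hφd : DifferentiableOn ℂ φ U) (hφm : MapsTo φ U U)
    (hψd : DifferentiableOn ℂ ψ U) (hψm : MapsTo ψ U U) (hleft : ∀ z ∈ U, ψ (φ z) = z) :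
    ∃ φt : ℝ → F → F, IsHolSemigroupOn U φt ∧ ∀ z ∈ U, φt 1 z = φ z := by
  subst hU
  have hsymm : MapsTo e.symm (Metric.ball 0 1) (e ⁻¹' Metric.ball 0 1) := fun z hz => by
    rwa [mem_preimage, e.apply_symm_apply]
  have hmaps := mapsTo_preimage e (Metric.ball 0 1)
  have hconj {f : F → F} (hf : DifferentiableOn ℂ f (e ⁻¹' Metric.ball 0 1)) :
      DifferentiableOn ℂ (e ∘ f ∘ e.symm) (Metric.ball 0 1) :=
    e.differentiable.comp_differentiableOn
      (hf.comp e.symm.differentiable.differentiableOn hsymm)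
  obtain ⟨φt, hφt, hφt1⟩ := exists_isHolSemigroupOn_ball
    (hconj hφd) (hmaps.comp (hφm.comp hsymm)) (hconj hψd) (hmaps.comp (hψm.comp hsymm))
    fun z hz => by simp [hleft _ (hsymm hz)]
  exact ⟨_, hφt.conj e, fun z hz => by simp [hφt1 hz]⟩

/-- Every automorphism `φ` of `B_N` (a biholomorphic bijection of `B_N` onto
itself, with holomorphic inverse `ψ`) can be embedded into a semigroup of
holomorphic self-maps of `B_N`. -/
theorem stmt17 {N : ℕ} (φ ψ : (Fin N → ℂ) → (Fin N → ℂ))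
    (hφd : DifferentiableOn ℂ φ (Ball N)) (hφm : MapsTo φ (Ball N) (Ball N))
    (hψd : DifferentiableOn ℂ ψ (Ball N)) (hψm : MapsTo ψ (Ball N) (Ball N))
    (hleft : ∀ z ∈ Ball N, ψ (φ z) = z) (hright : ∀ z ∈ Ball N, φ (ψ z) = z) :
    ∃ φt : ℝ → (Fin N → ℂ) → (Fin N → ℂ),
      IsHolSemigroupOn (Ball N) φt ∧ ∀ z ∈ Ball N, φt 1 z = φ z :=
  stmt17_general _ (ball_eq_preimage N) hφd hφm hψd hψm hleft
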